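/- Let R be a local Cohen–Macaulay ring and let I be an R-ideal. Suppose that I satisfies condition G_s and is weakly (s−2)-residually S₂ for some integer s. Let K = 𝔞 : I be an s-residual intersection of I with 𝔞 ⊆ I and μ(𝔞) ≤ s. Then 𝔞/K𝔞 is a free R/K-module of rank s. -/

import Mathlib

open IsLocalRing

universe u v

namespace CPU

section Defs

variable {R : Type u} [CommRing R]

/-- The minimal number of generators of a submodule, as an extended natural number. -/
noncomputable def muE {M : Type v} [AddCommGroup M] [Module R M] (N : Submodule R M) : ℕ∞ :=
  sInf {n : ℕ∞ | ∃ s : Finset M, (s.card : ℕ∞) = n ∧ Submodule.span R (s : Set M) = N}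

/-- The Krull dimension of a ring, valued in `WithBot ℕ∞`. -/
noncomputable def rDim (S : Type v) [CommRing S] : WithBot ℕ∞ :=
  ringKrullDim S

/-- `J` is a reduction of `I`. -/
def IsReduction (J I : Ideal R) : Prop :=
  J ≤ I ∧ ∃ r : ℕ, I ^ (r + 1) = J * I ^ r

/-- `J` is a minimal reduction of `I`. -/
def IsMinimalReduction (J I : Ideal R) : Prop :=
  IsReduction J I ∧ ∀ J' : Ideal R, IsReduction J' I → J' ≤ J → J' = J

/-- The core of an ideal: the intersection of all of its minimal reductions. -/
noncomputable def core (I : Ideal R) : Ideal R :=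
  sInf {J : Ideal R | IsMinimalReduction J I}

/-- The reduction number of `I`. -/
noncomputable def reductionNumber (I : Ideal R) : ℕ∞ :=
  sInf {n : ℕ∞ | ∃ r : ℕ, (r : ℕ∞) = n ∧ ∃ J : Ideal R,
    IsMinimalReduction J I ∧ I ^ (r + 1) = J * I ^ r}

/-- `γ(I)`: the least number of minimal reductions whose intersection is the core. -/
noncomputable def gamma (I : Ideal R) : ℕ∞ :=
  sInf {n : ℕ∞ | ∃ t : ℕ, (t : ℕ∞) = n ∧ ∃ Js : Fin t → Ideal R,
    (∀ i, IsMinimalReduction (Js i) I) ∧ core I = ⨅ i, Js i}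

/-- The height of an ideal. -/
noncomputable def ht (I : Ideal R) : WithBot ℕ∞ :=
  ⨅ (p : PrimeSpectrum R) (_ : I ≤ p.asIdeal),
    rDim (Localization.AtPrime p.asIdeal)

/-- The Krull dimension of the special fiber ring of `I`,
i.e. the analytic spread of `I`. -/
noncomputable def fiberDim [IsLocalRing R] (I : Ideal R) : WithBot ℕ∞ :=
  rDim (↥(reesAlgebra I) ⧸
    (Ideal.map (algebraMap R ↥(reesAlgebra I)) (maximalIdeal R)))

/-- The condition `G_s`. -/
def Gcond (I : Ideal R) (s : ℕ) : Prop :=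
  ∀ p : PrimeSpectrum R, I ≤ p.asIdeal →
    rDim (Localization.AtPrime p.asIdeal) < (s : WithBot ℕ∞) →
    (muE (Ideal.map (algebraMap R (Localization.AtPrime p.asIdeal)) I) : WithBot ℕ∞) ≤
      rDim (Localization.AtPrime p.asIdeal)

/-- Depth of a module over a local ring, via lengths of regular sequences in the
maximal ideal. -/
noncomputable def mDepth (R : Type u) [CommRing R] [IsLocalRing R]
    (M : Type v) [AddCommGroup M] [Module R M] : ℕ∞ :=
  sSup {n : ℕ∞ | ∃ rs : List R, (∀ x ∈ rs, x ∈ maximalIdeal R) ∧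
    RingTheory.Sequence.IsRegular M rs ∧ (rs.length : ℕ∞) = n}

/-- Depth of the quotient `R/K` of a local ring `R`. -/
noncomputable def qDepth (R : Type u) [CommRing R] [IsLocalRing R] (K : Ideal R) : ℕ∞ :=
  mDepth R (R ⧸ K)

/-- The socle of `R/K`, for `R` local. -/
noncomputable def socle (R : Type u) [CommRing R] [IsLocalRing R] (K : Ideal R) :
    Ideal (R ⧸ K) :=
  Submodule.colon (⊥ : Ideal (R ⧸ K)) (Ideal.map (Ideal.Quotient.mk K) (maximalIdeal R))

/-- The Cohen–Macaulay type of the quotient `R/K` of a local ring `R`. -/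
noncomputable def qType (R : Type u) [CommRing R] [IsLocalRing R] (K : Ideal R) : ℕ∞ :=
  sInf {n : ℕ∞ | ∃ rs : List R, (∀ x ∈ rs, x ∈ maximalIdeal R) ∧
    RingTheory.Sequence.IsRegular (R ⧸ K) rs ∧ (rs.length : ℕ∞) = qDepth R K ∧
    muE (socle R (K ⊔ Ideal.ofList rs)) = n}

/-- Cohen–Macaulayness for a quotient `R/K` of a local ring `R`. -/
def IsCMQuot (R : Type u) [CommRing R] [IsLocalRing R] (K : Ideal R) : Prop :=
  rDim (R ⧸ K) = (qDepth R K : WithBot ℕ∞)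

/-- A Cohen–Macaulay local ring: depth equals Krull dimension. -/
def IsCMLocalRing (R : Type u) [CommRing R] [IsLocalRing R] : Prop :=
  rDim R = (qDepth R (⊥ : Ideal R) : WithBot ℕ∞)

/-- A Gorenstein local ring: Cohen–Macaulay of type one. -/
def IsGorensteinLocalRing (R : Type u) [CommRing R] [IsLocalRing R] : Prop :=
  IsCMLocalRing R ∧ qType R (⊥ : Ideal R) = 1

/-- Gorensteinness of the quotient ring `R/K` of a local ring. -/
def IsGorQuot (R : Type u) [CommRing R] [IsLocalRing R] (K : Ideal R) : Prop :=
  IsCMQuot R K ∧ qType R K = 1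

/-- A regular local ring: the maximal ideal is generated by `dim R` elements. -/
def IsRegularLocal (R : Type u) [CommRing R] [IsLocalRing R] : Prop :=
  IsNoetherianRing R ∧ (muE (maximalIdeal R) : WithBot ℕ∞) = rDim R

/-- Serre's condition `S₂` for the quotient ring `R/K`. -/
def QuotS2 (K : Ideal R) : Prop :=
  ∀ (q : Ideal R) (hq : q.IsPrime), K ≤ q →
    letI := hq
    min 2 (rDim ((Localization.AtPrime q) ⧸
        (Ideal.map (algebraMap R (Localization.AtPrime q)) K)))
      ≤ (qDepth (Localization.AtPrime q)
          (Ideal.map (algebraMap R (Localization.AtPrime q)) K) : WithBot ℕ∞)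

/-- `K` is an `s`-residual intersection of `I`. -/
def IsResidualIntersection (I K : Ideal R) (s : ℕ) : Prop :=
  K ≠ ⊤ ∧ ht I ≤ (s : WithBot ℕ∞) ∧ (s : WithBot ℕ∞) ≤ ht K ∧
    ∃ a : Ideal R, a ≤ I ∧ (∃ f : Finset R, f.card ≤ s ∧ Ideal.span (f : Set R) = a) ∧
      K = Submodule.colon a I

/-- `K` is a geometric `s`-residual intersection of `I`. -/
def IsGeometricRI (I K : Ideal R) (s : ℕ) : Prop :=
  IsResidualIntersection I K s ∧ (s : WithBot ℕ∞) + 1 ≤ ht (I ⊔ K)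

/-- `I` is weakly `s`-residually `S₂`. -/
def WeaklyResS2 (I : Ideal R) (s : ℕ) : Prop :=
  ∀ i ≤ s, ∀ K : Ideal R, IsGeometricRI I K i → QuotS2 K

/-- The condition `AN_s` for `I`. -/
def ANcond [IsLocalRing R] (I : Ideal R) (s : ℕ) : Prop :=
  ∀ i ≤ s, ∀ K : Ideal R, IsResidualIntersection I K i → IsCMQuot R K

/-- The condition `AN_s⁻` for `I`. -/
def ANminus [IsLocalRing R] (I : Ideal R) (s : ℕ) : Prop :=
  ∀ i ≤ s, ∀ K : Ideal R, IsGeometricRI I K i → IsCMQuot R K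

/-- `I` is universally weakly `s`-residually `S₂`: for every finite set of
variables, the extension of `I` to `R(x₁, …, x_n)` is weakly `s`-residually `S₂`. -/
def UnivWeaklyResS2 [IsLocalRing R] (I : Ideal R) (s : ℕ) : Prop :=
  ∀ (n : ℕ)
    (hP : (Ideal.map (MvPolynomial.C (σ := Fin n)) (maximalIdeal R)).IsPrime),
    letI := hP
    WeaklyResS2 (Ideal.map
      ((algebraMap (MvPolynomial (Fin n) R)
        (Localization.AtPrime
          (Ideal.map (MvPolynomial.C (σ := Fin n)) (maximalIdeal R)))).comp
        (MvPolynomial.C)) I) s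

/-- The `j`-th Fitting ideal of (the module) `I`. -/
noncomputable def fittingIdeal (I : Ideal R) (j : ℕ) : Ideal R :=
  ⨆ (n : ℕ) (π : (Fin n → R) →ₗ[R] R) (_ : LinearMap.range π = I),
    Ideal.span {d : R | ∃ (v : Fin (n - j) → (Fin n → R)) (r : Fin (n - j) → Fin n),
      (∀ k, π (v k) = 0) ∧ d = Matrix.det (Matrix.of fun i k => v k (r i))}

/-- The set `Q(I)` of primes containing `Fitt_ℓ(I)` at which `R` has dimension `ℓ`
and `I` has analytic spread `ℓ`. -/
def QSet [IsLocalRing R] (I : Ideal R) (l : ℕ) : Set (PrimeSpectrum R) :=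
  {p | fittingIdeal I l ≤ p.asIdeal ∧
    rDim (Localization.AtPrime p.asIdeal) = (l : WithBot ℕ∞) ∧
    fiberDim (Ideal.map (algebraMap R (Localization.AtPrime p.asIdeal)) I)
      = (l : WithBot ℕ∞)}

/-- An ideal is integrally closed if it admits no larger ideal of which it is a
reduction. -/
def IsIntClosedIdeal (I : Ideal R) : Prop :=
  ∀ J : Ideal R, IsReduction I J → J = I

/-- A normal ideal: all powers are integrally closed. -/
def IsNormalIdeal (I : Ideal R) : Prop :=
  ∀ j : ℕ, IsIntClosedIdeal (I ^ j)

/-- `φ` is a presentation matrix of the ideal `I` (with `n = μ(I)` rows). -/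
def Presents {n m : ℕ} (φ : Matrix (Fin n) (Fin m) R) (I : Ideal R) : Prop :=
  muE I = (n : ℕ∞) ∧ ∃ π : (Fin n → R) →ₗ[R] R, LinearMap.range π = I ∧
    LinearMap.range (Matrix.toLin' φ) = LinearMap.ker π

/-- The ideal of `t × t` minors of a matrix. -/
noncomputable def minorsIdeal {n m : ℕ} (t : ℕ) (φ : Matrix (Fin n) (Fin m) R) : Ideal R :=
  Ideal.span {d : R | ∃ (r : Fin t → Fin n) (c : Fin t → Fin m),
    d = (φ.submatrix r c).det}

/-- The grade of an ideal: the supremum of lengths of regular sequences contained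
in it. -/
noncomputable def grade (I : Ideal R) : ℕ∞ :=
  sSup {n : ℕ∞ | ∃ rs : List R, (∀ x ∈ rs, x ∈ I) ∧
    RingTheory.Sequence.IsRegular R rs ∧ (rs.length : ℕ∞) = n}

end Defs

/-- `M` has projective dimension at most `n` over `R`. -/
def ProjDimLE (R : Type u) [CommRing R] :
    (n : ℕ) → (M : Type u) → [AddCommGroup M] → [Module R M] → Prop
  | 0, M, _, _ => Module.Projective R M
  | n + 1, M, _, _ => ∃ (k : ℕ) (f : (Fin k → R) →ₗ[R] M), Function.Surjective f ∧
      ProjDimLE R n ↥(LinearMap.ker f)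

section Defs2

variable {R : Type u} [CommRing R]

/-- `M` has projective dimension exactly `n` over `R`. -/
def ProjDimEq (R : Type u) [CommRing R] (M : Type u) [AddCommGroup M] [Module R M]
    (n : ℕ) : Prop :=
  ProjDimLE R n M ∧ ∀ m : ℕ, ProjDimLE R m M → n ≤ m

/-- A perfect ideal: the projective dimension of `R/I` equals the grade of `I`. -/
def IsPerfectIdeal (I : Ideal R) : Prop :=
  ∃ g : ℕ, grade I = (g : ℕ∞) ∧ ProjDimEq R (R ⧸ I) g

/-- The multiplicative set which is the complement of the union of the associated
primes of `R/H`. -/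
def assComplement (H : Ideal R) : Submonoid R where
  carrier := {r : R | ∀ p ∈ associatedPrimes R (R ⧸ H), r ∉ p}
  one_mem' := fun p hp => (Ideal.ne_top_iff_one p).mp hp.1.ne_top
  mul_mem' := fun {a b} ha hb p hp hab =>
    (hp.1.mem_or_mem hab).elim (ha p hp) (hb p hp)

/-- The `j`-th symbolic power of `H`. -/
noncomputable def symbolicPower (H : Ideal R) (j : ℕ) : Ideal R :=
  Ideal.comap (algebraMap R (Localization (assComplement H)))
    (Ideal.map (algebraMap R (Localization (assComplement H))) (H ^ j))

/-- Serre's condition `S₂` for a module. -/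
def ModuleS2 (S : Type u) [CommRing S] (M : Type v) [AddCommGroup M] [Module S M] : Prop :=
  ∀ (q : Ideal S) (hq : q.IsPrime),
    letI := hq
    min 2 (rDim ((Localization.AtPrime q) ⧸
        (Module.annihilator (Localization.AtPrime q) (LocalizedModule q.primeCompl M))))
      ≤ (mDepth (Localization.AtPrime q) (LocalizedModule q.primeCompl M) : WithBot ℕ∞)

/-- `M` is a maximal Cohen–Macaulay `S`-module. -/
def IsMCM (S : Type u) [CommRing S] (M : Type v) [AddCommGroup M] [Module S M] : Prop :=
  ∀ (q : Ideal S) (hq : q.IsMaximal),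
    letI := hq.isPrime
    (mDepth (Localization.AtPrime q) (LocalizedModule q.primeCompl M) : WithBot ℕ∞) =
      rDim (Localization.AtPrime q)

end Defs2

/-!
Everything rests on one property of a system of generators `b₀, …, b_{s-1}` of `𝔞` that is
general enough: in a relation `∑ rⱼ bⱼ = 0` the last coefficient lies in `K`. Replacing the
generators `aⱼ` by `bⱼ` with `bⱼ - aⱼ ∈ K𝔞` does not change whether the last coefficient of
every relation lies in `K`, and any generator can be made the last one, so every relation among
arbitrary generators of `𝔞` has coefficients in `K`. This is the freeness of `𝔞 / K𝔞`.

By `G_s` and a basic element argument, the `bⱼ` can be chosen with `(b₀, …, b_{i-1}) : I` a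
geometric `i`-residual intersection for `ht I ≤ i < s`; this is possible within the cosets
`aⱼ + K𝔞` because `K` is contained in no prime of height less than `s`. With `N = (b₀, …, b_{i-1})`,
the associated primes of `(I + N) / N` have height at most `i`: for `i ≤ ht I` because `N` is
generated by a regular sequence, and in the step from `i` to `i + 1` because `R / (N : I)` is
`S₂` and `bᵢ` is regular on it. For `i = s - 1` this shows that `y b_{s-1} ∈ N` implies
`y I ⊆ N`, hence `y ∈ 𝔞 : I = K`.
-/

open Pointwise RingTheory.Sequence CategoryTheory Abelian

section Depth

variable {R : Type u} [CommRing R]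

/-- Reduction modulo `x` turns `R ⧸ N` into `R ⧸ (N + (x))`. -/
noncomputable def quotSMulTopQuotientEquiv (N : Ideal R) (x : R) :
    QuotSMulTop x (R ⧸ N) ≃ₗ[R] R ⧸ N ⊔ Ideal.span {x} :=
  (Submodule.quotEquivOfEq _ _ (by
    rw [← Submodule.range_mkQ, LinearMap.range_eq_map, ← Submodule.map_pointwise_smul,
      ← Submodule.ideal_span_singleton_smul, smul_eq_mul, Ideal.mul_top])).trans
    (Submodule.quotientQuotientEquivQuotientSup N (Ideal.span {x}))

lemma notMem_of_mem_associatedPrimes [IsNoetherianRing R] {M : Type v} [AddCommGroup M]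
    [Module R M] {p : Ideal R} {x : R} (hp : p ∈ associatedPrimes R M)
    (hx : IsSMulRegular M x) : x ∉ p := fun hxp =>
  (biUnion_associatedPrimes_eq_compl_regular R M).subset (Set.mem_biUnion hp hxp) hx

lemma mem_associatedPrimes_quotSMulTop_of_mem_minimalPrimes [IsNoetherianRing R] {M : Type v}
    [AddCommGroup M] [Module R M] [Module.Finite R M] {x : R} (hx : IsSMulRegular M x)
    {q p : Ideal R} (hq : q ∈ associatedPrimes R M)
    (hp : p ∈ (q ⊔ Ideal.span {x}).minimalPrimes) : p ∈ associatedPrimes R (QuotSMulTop x M) := by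
  -- `H = {m | q m = 0}` has annihilator `q`, and `H / xH` embeds into `M / xM`.
  let H := Submodule.torsionBySet R M q
  have ann_H : Module.annihilator R H = q := by
    obtain ⟨-, y, hy⟩ := isAssociatedPrime_iff.1 hq
    refine le_antisymm (fun r hr => ?_) fun r hr => Module.mem_annihilator.2 fun h =>
      Subtype.ext ((Submodule.mem_torsionBySet_iff _ _).1 h.2 ⟨r, hr⟩)
    have hyH : y ∈ H := (Submodule.mem_torsionBySet_iff _ _).2 fun c =>
      Submodule.mem_colon_singleton.1 (hy.le c.2)
    rw [hy]
    exact Submodule.mem_colon_singleton.2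
      (congrArg Subtype.val (Module.mem_annihilator.1 hr ⟨y, hyH⟩))
  have injective : Function.Injective (QuotSMulTop.map x H.subtype) := by
    rw [← LinearMap.ker_eq_bot, LinearMap.ker_eq_bot']
    rintro ⟨h⟩ hh
    obtain ⟨m, -, hm⟩ := (Submodule.Quotient.mk_eq_zero _).1 hh
    have hmH : m ∈ H := (Submodule.mem_torsionBySet_iff _ _).2 fun c => hx.right_eq_zero_of_smul (by
      rw [smul_comm]
      exact (congrArg ((c : R) • ·) hm).trans ((Submodule.mem_torsionBySet_iff _ _).1 h.2 c))
    exact (Submodule.Quotient.mk_eq_zero _).2 ⟨⟨m, hmH⟩, trivial, Subtype.ext hm⟩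
  have radical_ann : (Module.annihilator R (QuotSMulTop x H)).radical =
      (q ⊔ Ideal.span {x}).radical := by
    rw [← PrimeSpectrum.zeroLocus_eq_iff, ← Module.support_eq_zeroLocus,
      Module.support_quotSMulTop, Module.support_eq_zeroLocus, ann_H, PrimeSpectrum.zeroLocus_sup,
      PrimeSpectrum.zeroLocus_span]
  rw [← Ideal.radical_minimalPrimes, ← radical_ann, Ideal.radical_minimalPrimes] at hp
  exact associatedPrimes.subset_of_injective injective
    (Module.associatedPrimes.minimalPrimes_annihilator_subset_associatedPrimes R _ hp)

variable [IsLocalRing R]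

lemma mDepth_congr {M : Type*} {M' : Type*} [AddCommGroup M] [Module R M] [AddCommGroup M']
    [Module R M'] (e : M ≃ₗ[R] M') : mDepth R M = mDepth R M' := by
  simp only [mDepth, e.isRegular_congr]

lemma exists_isRegular_of_lt_mDepth {M : Type*} [AddCommGroup M] [Module R M] {n : ℕ}
    (h : (n : ℕ∞) < mDepth R M) :
    ∃ rs : List R, (∀ x ∈ rs, x ∈ maximalIdeal R) ∧ IsRegular M rs ∧ n < rs.length := by
  obtain ⟨_, ⟨rs, hrs, hreg, rfl⟩, hlt⟩ := lt_sSup_iff.1 h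
  exact ⟨rs, hrs, hreg, by exact_mod_cast hlt⟩

lemma exists_isSMulRegular_of_mDepth_ne_zero {M : Type*} [AddCommGroup M] [Module R M]
    (h : mDepth R M ≠ 0) : ∃ x ∈ maximalIdeal R, IsSMulRegular M x := by
  obtain ⟨_ | ⟨x, rs⟩, hrs, hreg, hlen⟩ :=
    exists_isRegular_of_lt_mDepth (n := 0) (by exact_mod_cast pos_iff_ne_zero.2 h)
  · exact absurd hlen (lt_irrefl _)
  · exact ⟨x, hrs x List.mem_cons_self, ((isRegular_cons_iff _ _ _).1 hreg).1⟩

variable [IsNoetherianRing R] {M : Type u} [AddCommGroup M] [Module R M] [Module.Finite R M]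

lemma natCast_le_mDepth_iff_subsingleton_ext [Nontrivial M] {n : ℕ} :
    (n : ℕ∞) ≤ mDepth R M ↔
      ∀ i < n, Subsingleton (Ext (ModuleCat.of R (R ⧸ maximalIdeal R)) (ModuleCat.of R M) i) := by
  have smul_lt : maximalIdeal R • (⊤ : Submodule R (ModuleCat.of R M)) < ⊤ :=
    (Submodule.top_ne_ideal_smul_of_le_jacobson_annihilator
      (maximalIdeal_le_jacobson _)).symm.lt_top
  have support_residueField : Module.support R (ModuleCat.of R (R ⧸ maximalIdeal R)) =
      PrimeSpectrum.zeroLocus (maximalIdeal R) := by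
    rw [Module.support_eq_zeroLocus, Ideal.annihilator_quotient]
  constructor
  · intro h i hi
    obtain ⟨rs, hrs, hreg, hlen⟩ :=
      exists_isRegular_of_lt_mDepth ((Nat.cast_lt.2 hi).trans_le h)
    exact ModuleCat.subsingleton_ext_of_exists_isRegular (maximalIdeal R) _
      support_residueField.subset _ smul_lt rs hrs hreg i hlen
  · intro h
    obtain ⟨rs, hlen, hrs, hreg⟩ := ModuleCat.exists_isRegular_of_exists_subsingleton_ext
      (maximalIdeal R) n (ModuleCat.of R M) smul_lt _ support_residueField h
    exact le_sSup ⟨rs, hrs, hreg, by rw [hlen]⟩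

lemma mDepth_le_mDepth_quotSMulTop_add_one [Nontrivial M] {x : R} (hx : IsSMulRegular M x)
    (hxm : x ∈ maximalIdeal R) : mDepth R M ≤ mDepth R (QuotSMulTop x M) + 1 := by
  have := nontrivial_quotSMulTop_of_mem_maximalIdeal M hxm
  refine ENat.forall_natCast_le_iff_le.1 fun n hn => ?_
  rcases n with _ | n
  · exact bot_le
  rw [natCast_le_mDepth_iff_subsingleton_ext] at hn
  suffices (n : ℕ∞) ≤ mDepth R (QuotSMulTop x M) by push_cast; gcongr
  refine natCast_le_mDepth_iff_subsingleton_ext.2 fun i hi => ?_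
  have hx' : IsSMulRegular (ModuleCat.of R M) x := hx
  have ext_i := AddCommGrpCat.isZero_of_iff_subsingleton.2 (hn i (by omega))
  have ext_succ := AddCommGrpCat.isZero_of_iff_subsingleton.2 (hn (i + 1) (by omega))
  exact AddCommGrpCat.subsingleton_of_isZero <| ShortComplex.Exact.isZero_of_both_zeros
    (Ext.covariant_sequence_exact₃' _ hx'.smulShortComplex_shortExact i (i + 1) rfl)
    (ext_i.eq_zero_of_src _) (ext_succ.eq_zero_of_tgt _)

lemma height_add_length_le_of_mem_associatedPrimes {M : Type v} [AddCommGroup M] [Module R M]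
    [Module.Finite R M] {rs : List R} (hrs : ∀ x ∈ rs, x ∈ maximalIdeal R)
    (hreg : IsWeaklyRegular M rs) {p : Ideal R} (hp : p ∈ associatedPrimes R M) :
    p.height + rs.length ≤ (maximalIdeal R).height := by
  induction rs generalizing M p with
  | nil => simpa using Ideal.height_mono (le_maximalIdeal hp.1.ne_top)
  | cons x rs ih =>
    have hpp : p.IsPrime := hp.1
    obtain ⟨hx, hreg⟩ := (isWeaklyRegular_cons_iff _ _ _).1 hreg
    simp only [List.mem_cons, forall_eq_or_imp] at hrs
    obtain ⟨p', hp', -⟩ := Ideal.exists_minimalPrimes_le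
      (sup_le (le_maximalIdeal hpp.ne_top) ((Ideal.span_singleton_le_iff_mem _).2 hrs.1))
    have hpp' : p'.IsPrime := hp'.1.1
    have hxp' : x ∈ p' := (sup_le_iff.1 hp'.1.2).2 (Ideal.mem_span_singleton_self x)
    have hlt : p < p' := (le_sup_left.trans hp'.1.2).lt_of_ne fun h =>
      notMem_of_mem_associatedPrimes hp hx (h ▸ hxp')
    calc p.height + (rs.length + 1 : ℕ) = p.height + 1 + rs.length := by push_cast; ring
      _ ≤ p'.height + rs.length := by gcongr; exact Ideal.height_add_one_le_of_lt_of_isPrime hlt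
      _ ≤ _ := ih hrs.2 hreg (mem_associatedPrimes_quotSMulTop_of_mem_minimalPrimes hx hp hp')

lemma height_add_mDepth_le_of_mem_associatedPrimes {M : Type v} [AddCommGroup M] [Module R M]
    [Module.Finite R M] {p : Ideal R} (hp : p ∈ associatedPrimes R M) :
    p.height + mDepth R M ≤ (maximalIdeal R).height := by
  refine add_le_of_le_tsub_left_of_le (Ideal.height_mono (le_maximalIdeal hp.1.ne_top))
    (sSup_le ?_)
  rintro _ ⟨rs, hrs, hreg, rfl⟩
  have := hp.1
  exact (ENat.addLECancellable_of_ne_top Ideal.height_ne_top_of_isPrime).le_tsub_of_add_le_left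
    (height_add_length_le_of_mem_associatedPrimes hrs hreg.toIsWeaklyRegular hp)

end Depth

section Height

variable {R : Type u} [CommRing R]

lemma le_height_iff {J : Ideal R} {n : ℕ∞} :
    n ≤ J.height ↔ ∀ p : Ideal R, p.IsPrime → J ≤ p → n ≤ p.height := by
  rw [Ideal.height_eq_inf_minimalPrimes, le_iInf₂_iff]
  refine ⟨fun h p hp hJp => ?_, fun h p hp => h p hp.1.1 hp.1.2⟩
  obtain ⟨q, hq, hqp⟩ := Ideal.exists_minimalPrimes_le hJp
  exact (h q hq).trans (Ideal.height_mono hqp)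

lemma rDim_localization_atPrime (p : Ideal R) [p.IsPrime] :
    rDim (Localization.AtPrime p) = (p.height : WithBot ℕ∞) :=
  IsLocalization.AtPrime.ringKrullDim_eq_height p _

lemma ht_eq_height (J : Ideal R) : ht J = (J.height : WithBot ℕ∞) := by
  refine eq_of_forall_le_iff fun n => ?_
  simp only [ht, rDim_localization_atPrime, le_iInf_iff]
  induction n with
  | bot => simp
  | coe n =>
    simp only [WithBot.coe_le_coe, le_height_iff (J := J)]
    exact ⟨fun h p hp => h ⟨p, hp⟩, fun h p => h p.asIdeal p.2⟩

lemma exists_isSMulRegular_of_not_le_associatedPrimes [IsNoetherianRing R] {M : Type v}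
    [AddCommGroup M] [Module R M] [Module.Finite R M] {J : Ideal R}
    (h : ∀ p ∈ associatedPrimes R M, ¬ J ≤ p) : ∃ x ∈ J, IsSMulRegular M x := by
  by_contra! hJ
  have hsub : (J : Set R) ⊆ ⋃ p ∈ (associatedPrimes.finite R M).toFinset, (p : Set R) := by
    simp only [Set.Finite.mem_toFinset, biUnion_associatedPrimes_eq_compl_regular]
    exact hJ
  obtain ⟨p, hp, hJp⟩ := (Ideal.subset_union_prime (f := id) ⊤ ⊤ fun p hp _ _ =>
    ((Set.Finite.mem_toFinset _).1 hp).1).1 hsub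
  exact h p ((Set.Finite.mem_toFinset _).1 hp) hJp

lemma isSMulRegular_of_forall_notMem_associatedPrimes [IsNoetherianRing R] {M : Type v}
    [AddCommGroup M] [Module R M] {x : R} (h : ∀ p ∈ associatedPrimes R M, x ∉ p) :
    IsSMulRegular M x := by
  have hx : x ∉ ⋃ p ∈ associatedPrimes R M, (p : Set R) := by
    simpa only [Set.mem_iUnion, not_exists, SetLike.mem_coe] using h
  rw [biUnion_associatedPrimes_eq_compl_regular] at hx
  exact not_not.1 hx

lemma mem_associatedPrimes_quotient_of_mem_minimalPrimes [IsNoetherianRing R] {N p : Ideal R}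
    (hp : p ∈ N.minimalPrimes) : p ∈ associatedPrimes R (R ⧸ N) :=
  Module.associatedPrimes.minimalPrimes_annihilator_subset_associatedPrimes R _
    (by rwa [Ideal.annihilator_quotient])

lemma le_of_mem_associatedPrimes_quotient {N p : Ideal R}
    (hp : p ∈ associatedPrimes R (R ⧸ N)) : N ≤ p := by
  simpa only [Submodule.annihilator_top, Ideal.annihilator_quotient] using
    IsAssociatedPrime.annihilator_le hp

end Height

section CohenMacaulay

variable {R : Type u} [CommRing R] [IsLocalRing R]

/-- The quotient `R ⧸ N` is Cohen–Macaulay of codimension `j` in the local ring `R`: its depth is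
at least `dim R - j`, and `N` has height at least `j`. -/
structure IsCMOfCodim (N : Ideal R) (j : ℕ) : Prop where
  ne_top : N ≠ ⊤
  le_height : (j : ℕ∞) ≤ N.height
  height_le_qDepth_add : (maximalIdeal R).height ≤ qDepth R N + j

lemma IsCMLocalRing.isCMOfCodim_bot (hCM : IsCMLocalRing R) : IsCMOfCodim (⊥ : Ideal R) 0 where
  ne_top := bot_ne_top
  le_height := bot_le
  height_le_qDepth_add := by
    rw [IsCMLocalRing, rDim, ← maximalIdeal_height_eq_ringKrullDim, WithBot.coe_inj] at hCM
    rw [hCM, Nat.cast_zero, add_zero]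

variable [IsNoetherianRing R] {N p q : Ideal R} {j : ℕ} {x : R}

lemma IsCMOfCodim.height_eq_of_mem_associatedPrimes (h : IsCMOfCodim N j)
    (hp : p ∈ associatedPrimes R (R ⧸ N)) : p.height = j := by
  refine le_antisymm ?_
    (h.le_height.trans (Ideal.height_mono (le_of_mem_associatedPrimes_quotient hp)))
  have hle : p.height + qDepth R N ≤ (maximalIdeal R).height :=
    height_add_mDepth_le_of_mem_associatedPrimes hp
  have qDepth_ne_top : qDepth R N ≠ ⊤ := ne_top_of_le_ne_top
    (Ideal.height_ne_top_of_isPrime (I := maximalIdeal R)) (le_add_self.trans hle)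
  rw [add_comm] at hle
  exact (ENat.add_le_add_iff_left qDepth_ne_top).1 (hle.trans h.height_le_qDepth_add)

lemma IsCMOfCodim.sup_span_singleton (h : IsCMOfCodim N j) (hx : IsSMulRegular (R ⧸ N) x)
    (hxm : x ∈ maximalIdeal R) : IsCMOfCodim (N ⊔ Ideal.span {x}) (j + 1) where
  ne_top := ne_top_of_le_ne_top (maximalIdeal.isMaximal R).ne_top
    (sup_le (le_maximalIdeal h.ne_top) ((Ideal.span_singleton_le_iff_mem _).2 hxm))
  le_height := le_height_iff.2 fun p hp hle => by
    obtain ⟨q, hq, hqp⟩ := Ideal.exists_minimalPrimes_le (le_sup_left.trans hle)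
    have hqN := mem_associatedPrimes_quotient_of_mem_minimalPrimes hq
    have := hqN.1
    have hlt : q < p := hqp.lt_of_ne fun heq => notMem_of_mem_associatedPrimes hqN hx
      (heq ▸ hle (Ideal.mem_sup_right (Ideal.mem_span_singleton_self x)))
    rw [Nat.cast_add_one, ← h.height_eq_of_mem_associatedPrimes hqN]
    exact Ideal.height_add_one_le_of_lt_of_isPrime hlt
  height_le_qDepth_add := by
    have := Ideal.Quotient.nontrivial_iff.2 h.ne_top
    have hdrop : qDepth R N ≤ qDepth R (N ⊔ Ideal.span {x}) + 1 := by
      rw [qDepth, qDepth, ← mDepth_congr (quotSMulTopQuotientEquiv N x)]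
      exact mDepth_le_mDepth_quotSMulTop_add_one hx hxm
    calc (maximalIdeal R).height ≤ qDepth R N + j := h.height_le_qDepth_add
      _ ≤ qDepth R (N ⊔ Ideal.span {x}) + 1 + j := by gcongr
      _ = qDepth R (N ⊔ Ideal.span {x}) + (j + 1 : ℕ) := by push_cast; ring

lemma IsCMOfCodim.exists_isSMulRegular_of_lt_height (h : IsCMOfCodim N j)
    (hp : (j : ℕ∞) < p.height) : ∃ x ∈ p, IsSMulRegular (R ⧸ N) x :=
  exists_isSMulRegular_of_not_le_associatedPrimes fun _ hp' hle =>
    (h.height_eq_of_mem_associatedPrimes hp' ▸ hp).not_ge (Ideal.height_mono hle)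

lemma IsCMLocalRing.exists_isCMOfCodim_le (hCM : IsCMLocalRing R) [hq : q.IsPrime]
    (hj : (j : ℕ∞) ≤ q.height) : ∃ N ≤ q, IsCMOfCodim N j := by
  induction j with
  | zero => exact ⟨⊥, bot_le, hCM.isCMOfCodim_bot⟩
  | succ j ih =>
    have hlt : (j : ℕ∞) < q.height := (Nat.cast_lt.2 j.lt_succ_self).trans_le hj
    obtain ⟨N, hNq, hN⟩ := ih hlt.le
    obtain ⟨x, hxq, hx⟩ := hN.exists_isSMulRegular_of_lt_height hlt
    exact ⟨N ⊔ Ideal.span {x}, sup_le hNq ((Ideal.span_singleton_le_iff_mem _).2 hxq),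
      hN.sup_span_singleton hx (le_maximalIdeal hq.ne_top hxq)⟩

lemma IsCMLocalRing.exists_isPrime_between (hCM : IsCMLocalRing R) [hq : q.IsPrime]
    [hp : p.IsPrime] (hqp : q < p) (hheight : q.height + 1 < p.height) :
    ∃ q' : Ideal R, q'.IsPrime ∧ q < q' ∧ q' < p := by
  obtain ⟨j, hj⟩ := ENat.ne_top_iff_exists.1 (Ideal.height_ne_top_of_isPrime (I := q))
  obtain ⟨N, hNq, hN⟩ := hCM.exists_isCMOfCodim_le hj.le
  rw [← hj] at hheight
  obtain ⟨x, hxp, hx⟩ :=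
    hN.exists_isSMulRegular_of_lt_height (le_self_add.trans_lt hheight)
  have hqN : q ∈ associatedPrimes R (R ⧸ N) :=
    mem_associatedPrimes_quotient_of_mem_minimalPrimes
      (Ideal.mem_minimalPrimes_of_height_le hNq (hj ▸ hN.le_height))
  -- A minimal prime of `q + (x)` is associated to `R ⧸ (N + (x))`, so it has height `j + 1`.
  obtain ⟨q', hq', hq'p⟩ := Ideal.exists_minimalPrimes_le
    (sup_le hqp.le ((Ideal.span_singleton_le_iff_mem _).2 hxp))
  have hass : q' ∈ associatedPrimes R (R ⧸ N ⊔ Ideal.span {x}) := by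
    rw [← LinearEquiv.AssociatedPrimes.eq (quotSMulTopQuotientEquiv N x)]
    exact mem_associatedPrimes_quotSMulTop_of_mem_minimalPrimes hx hqN hq'
  have hq'height := (hN.sup_span_singleton hx (le_maximalIdeal hp.ne_top hxp)
    ).height_eq_of_mem_associatedPrimes hass
  refine ⟨q', hq'.1.1, (le_sup_left.trans hq'.1.2).lt_of_ne fun heq => ?_,
    hq'p.lt_of_ne fun heq => ?_⟩
  · exact notMem_of_mem_associatedPrimes hqN hx
      (heq ▸ hq'.1.2 (Ideal.mem_sup_right (Ideal.mem_span_singleton_self x)))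
  · rw [← heq, hq'height, Nat.cast_add_one] at hheight
    exact hheight.false

end CohenMacaulay

section BasicElements

variable {R : Type u} [CommRing R] {M : Type v} [AddCommGroup M] [Module R M]
  {A N : Submodule R M} {p : Ideal R} {k : ℕ} {y z : M}

/-- The ideal cutting out the primes at which `k` elements of `A` do not suffice to generate `A`
modulo `N`: it plays the role of the `k`-th Fitting ideal of `(A + N) / N`. -/
noncomputable def generationIdeal (A N : Submodule R M) (k : ℕ) : Ideal R :=
  ⨆ c ∈ {c : Finset M | (c : Set M) ⊆ A ∧ c.card ≤ k},
    (N ⊔ Submodule.span R (c : Set M)).colon (A : Set M)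

/-- A basic element of `(A + N) / N` at `p`, in the sense of Eisenbud–Evans: at the prime `p`, the
element `z` is part of a minimal system of generators of `A` modulo `N`. -/
def IsBasicAt (A N : Submodule R M) (p : Ideal R) (z : M) : Prop :=
  (N ⊔ p • A).colon {z} ≤ p

lemma colon_le_generationIdeal {c : Finset M} (hc : (c : Set M) ⊆ A) (hk : c.card ≤ k) :
    (N ⊔ Submodule.span R (c : Set M)).colon (A : Set M) ≤ generationIdeal A N k :=
  le_iSup₂_of_le c ⟨hc, hk⟩ le_rfl

lemma not_generationIdeal_le_iff : ¬ generationIdeal A N k ≤ p ↔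
    ∃ c : Finset M, (c : Set M) ⊆ A ∧ c.card ≤ k ∧
      ¬ (N ⊔ Submodule.span R (c : Set M)).colon (A : Set M) ≤ p := by
  simp only [generationIdeal, iSup_le_iff, Set.mem_ofPred_eq, not_forall, exists_prop, and_assoc]

lemma generationIdeal_zero : generationIdeal A N 0 = N.colon (A : Set M) := by
  refine le_antisymm (iSup₂_le fun c hc => ?_) ?_
  · rw [Finset.card_eq_zero.1 (Nat.le_zero.1 hc.2), Finset.coe_empty, Submodule.span_empty,
      sup_bot_eq]
  · simpa using colon_le_generationIdeal (A := A) (N := N) (c := ∅) (by simp) le_rfl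

lemma generationIdeal_mono {N' : Submodule R M} (hN : N ≤ N') {k' : ℕ} (hk : k ≤ k') :
    generationIdeal A N k ≤ generationIdeal A N' k' :=
  iSup₂_le fun _ hc => (Submodule.colon_mono (sup_le_sup_right hN _) subset_rfl).trans
    (colon_le_generationIdeal hc.1 (hc.2.trans hk))

lemma exists_colon_singleton_le_of_colon_le [hp : p.IsPrime] (hA : A.FG)
    (h : N.colon (A : Set M) ≤ p) : ∃ u ∈ A, N.colon {u} ≤ p := by
  obtain ⟨S, rfl⟩ := hA
  have colon_eq_inf : N.colon (S : Set M) = S.inf fun u => N.colon {u} := by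
    ext r
    simp only [Submodule.mem_colon, Submodule.mem_finsetInf, Finset.mem_coe, Set.mem_singleton_iff,
      forall_eq]
  rw [Submodule.colon_span, colon_eq_inf, hp.inf_le'] at h
  obtain ⟨u, hu, hle⟩ := h
  exact ⟨u, Submodule.subset_span hu, hle⟩

lemma sup_smul_colon_le_of_colon_le [p.IsPrime] (hA : A.FG) (h : N.colon (A : Set M) ≤ p) :
    (N ⊔ p • A).colon (A : Set M) ≤ p := by
  have := Module.Finite.iff_fg.2 (hA.map N.mkQ)
  let V := A.map N.mkQ
  have mem_support : (⟨p, ‹_›⟩ : PrimeSpectrum R) ∈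
      Module.support R (V ⧸ p • (⊤ : Submodule R V)) := by
    rw [Module.support_quotient, Set.mem_inter_iff, Module.mem_support_iff_of_finite,
      PrimeSpectrum.mem_zeroLocus]
    exact ⟨(Submodule.annihilator_map_mkQ_eq_colon).le.trans h, le_rfl⟩
  refine le_trans (fun r hr => ?_) (Module.mem_support_iff_of_finite.1 mem_support)
  refine Module.mem_annihilator.2 ?_
  rintro ⟨_, a, ha, rfl⟩
  refine (Submodule.Quotient.mk_eq_zero _).2 (Submodule.mem_smul_top_iff p V _ |>.2 ?_)
  rw [← Submodule.map_smul'']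
  have := Submodule.mem_map_of_mem (f := N.mkQ) (Submodule.mem_colon.1 hr a ha)
  rwa [Submodule.map_sup, Submodule.mkQ_map_self, bot_sup_eq] at this

lemma exists_isBasicAt [p.IsPrime] (hA : A.FG) (h : N.colon (A : Set M) ≤ p) :
    ∃ y ∈ A, IsBasicAt A N p y :=
  exists_colon_singleton_le_of_colon_le hA (sup_smul_colon_le_of_colon_le hA h)

lemma IsBasicAt.exists_notMem_of_smul_mem (hz : IsBasicAt A N p z) {c : Finset M} {t : R}
    (hc : (c : Set M) ⊆ A) (ht : t ∉ p) (htz : t • z ∈ N ⊔ Submodule.span R (c : Set M)) :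
    ∃ n ∈ N, ∃ f : M → R, n + ∑ a ∈ c, f a • a = t • z ∧ ∃ a ∈ c, f a ∉ p := by
  obtain ⟨n, hn, w, hw, hsum⟩ := Submodule.mem_sup.1 htz
  obtain ⟨f, -, rfl⟩ := Submodule.mem_span_finset.1 hw
  refine ⟨n, hn, f, hsum, ?_⟩
  by_contra! hf
  refine ht (hz (Submodule.mem_colon_singleton.2 (hsum ▸ Submodule.add_mem_sup hn ?_)))
  exact Submodule.sum_mem _ fun a ha => Submodule.smul_mem_smul (hf a ha) (hc ha)

lemma IsBasicAt.not_generationIdeal_sup_span_singleton_le [hp : p.IsPrime]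
    (hz : IsBasicAt A N p z) (hzA : z ∈ A) (h : ¬ generationIdeal A N (k + 1) ≤ p) :
    ¬ generationIdeal A (N ⊔ Submodule.span R {z}) k ≤ p := by
  classical
  obtain ⟨c, hcA, hck, hc⟩ := not_generationIdeal_le_iff.1 h
  obtain ⟨t, ht, htp⟩ := SetLike.not_le_iff_exists.1 hc
  obtain ⟨n, hn, f, hsum, l, hl, hfl⟩ :=
    hz.exists_notMem_of_smul_mem hcA htp (Submodule.mem_colon.1 ht z hzA)
  -- `z` replaces the generator `l`, whose coefficient is a unit at `p`.
  set N' := N ⊔ Submodule.span R {z} ⊔ Submodule.span R (c.erase l : Set M)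
  have hNN' : N ≤ N' := le_sup_left.trans le_sup_left
  have hzN' : z ∈ N' := le_sup_left (a := N ⊔ _)
    (Submodule.mem_sup_right (Submodule.mem_span_singleton_self z))
  have herase : ∀ a ∈ c.erase l, a ∈ N' := fun a ha =>
    Submodule.mem_sup_right (Submodule.subset_span ha)
  have hflN' : f l • l ∈ N' := by
    rw [← Finset.add_sum_erase c _ hl] at hsum
    rw [show f l • l = t • z - n - ∑ a ∈ c.erase l, f a • a by rw [← hsum]; abel]
    exact sub_mem (sub_mem (N'.smul_mem t hzN') (hNN' hn))
      (sum_mem fun a ha => N'.smul_mem _ (herase a ha))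
  have hle : N ⊔ Submodule.span R (c : Set M) ≤ N'.comap (LinearMap.lsmul R M (f l)) := by
    refine sup_le (fun x hx => N'.smul_mem _ (hNN' hx)) (Submodule.span_le.2 fun a ha => ?_)
    rcases eq_or_ne a l with rfl | hal
    · exact hflN'
    · exact N'.smul_mem _ (herase a (Finset.mem_erase.2 ⟨hal, ha⟩))
  refine not_generationIdeal_le_iff.2 ⟨c.erase l, fun a ha => hcA (Finset.mem_of_mem_erase ha),
    by rw [Finset.card_erase_of_mem hl]; omega, fun hcon => ?_⟩
  refine (hp.mem_or_mem (hcon (Submodule.mem_colon.2 fun a ha => ?_) : f l * t ∈ p)).elim hfl htp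
  rw [mul_smul]
  exact hle (Submodule.mem_colon.1 ht a ha)

lemma IsBasicAt.add_smul_of_mem {r : R} (hz : IsBasicAt A N p z) (hr : r ∈ p) (hy : y ∈ A) :
    IsBasicAt A N p (z + r • y) := by
  refine fun t ht => hz (Submodule.mem_colon_singleton.2 ?_)
  rw [Submodule.mem_colon_singleton, smul_add] at ht
  exact (Submodule.add_mem_iff_left _ (Submodule.mem_sup_right
    (Submodule.smul_mem _ t (Submodule.smul_mem_smul hr hy)))).1 ht

lemma IsBasicAt.add_smul_of_notMem [hp : p.IsPrime] {r : R} (hy : IsBasicAt A N p y) (hr : r ∉ p)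
    (hz : ¬ IsBasicAt A N p z) : IsBasicAt A N p (z + r • y) := by
  obtain ⟨u, hu, hup⟩ := SetLike.not_le_iff_exists.1 hz
  intro t ht
  rw [Submodule.mem_colon_singleton] at hu ht
  have hmem : u * t * r ∈ p := hy (Submodule.mem_colon_singleton.2 (by
    rw [show (u * t * r) • y = u • t • (z + r • y) - t • u • z by
      simp only [smul_add, smul_smul, mul_comm t u, mul_assoc, add_sub_cancel_left]]
    exact Submodule.sub_mem _ (Submodule.smul_mem _ u ht) (Submodule.smul_mem _ t hu)))
  exact ((hp.mem_or_mem ((hp.mem_or_mem hmem).resolve_right hr)).resolve_left hup)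

lemma exists_mem_notMem_of_minimal {m : Ideal R} {P : Finset (Ideal R)} [hp : p.IsPrime]
    (hm : ¬ m ≤ p) (hP : ∀ q ∈ P, ¬ q ≤ p) : ∃ r ∈ m, r ∉ p ∧ ∀ q ∈ P, r ∈ q := by
  have hinf : ¬ m ⊓ P.inf id ≤ p := by
    rw [hp.inf_le, hp.inf_le']
    rintro (h | ⟨q, hq, hqp⟩)
    exacts [hm h, hP q hq hqp]
  obtain ⟨r, ⟨hrm, hrP⟩, hrp⟩ := SetLike.not_le_iff_exists.1 hinf
  exact ⟨r, hrm, hrp, fun q hq => (Finset.inf_le hq : P.inf id ≤ q) hrP⟩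

lemma exists_isBasicAt_sub_mem_smul {m : Ideal R} (P : Finset (Ideal R))
    (hP : ∀ p ∈ P, p.IsPrime ∧ ¬ m ≤ p ∧ ∃ y ∈ A, IsBasicAt A N p y) {a₀ : M} (ha₀ : a₀ ∈ A) :
    ∃ z ∈ A, z - a₀ ∈ m • A ∧ ∀ p ∈ P, IsBasicAt A N p z := by
  classical
  induction P using Finset.strongInduction with
  | H P ih =>
    rcases P.eq_empty_or_nonempty with rfl | hne
    · exact ⟨a₀, ha₀, by simp⟩
    obtain ⟨p, hpP, hmin⟩ := P.exists_minimal hne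
    obtain ⟨hp, hmp, y, hyA, hy⟩ := hP p hpP
    obtain ⟨z, hzA, hza, hz⟩ := ih (P.erase p) (Finset.erase_ssubset hpP)
      fun q hq => hP q (Finset.mem_of_mem_erase hq)
    by_cases hzp : IsBasicAt A N p z
    · exact ⟨z, hzA, hza, fun q hq => (eq_or_ne q p).elim (fun h => h ▸ hzp)
        fun h => hz q (Finset.mem_erase.2 ⟨h, hq⟩)⟩
    obtain ⟨r, hrm, hrp, hr⟩ := exists_mem_notMem_of_minimal (P := P.erase p) hmp
      fun q hq hqp => Finset.ne_of_mem_erase hq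
        (hqp.antisymm (hmin (Finset.mem_of_mem_erase hq) hqp))
    refine ⟨z + r • y, A.add_mem hzA (A.smul_mem r hyA), ?_, fun q hq => ?_⟩
    · rw [add_sub_right_comm]
      exact Submodule.add_mem _ hza (Submodule.smul_mem_smul hrm hyA)
    · rcases eq_or_ne q p with rfl | hqp
      · exact hy.add_smul_of_notMem hrp hzp
      · have hq' := Finset.mem_erase.2 ⟨hqp, hq⟩
        exact (hz q hq').add_smul_of_mem (hr q hq') hyA

end BasicElements

section GeneralPosition

variable {R : Type u} [CommRing R] {I A N p q : Ideal R} {s i k : ℕ}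

open Classical in
/-- The number of general elements of an ideal `I` satisfying `G_s` that are needed to generate `I`
at the prime `p`: the least `i` such that no `i`-residual intersection in general position passes
through `p`. -/
noncomputable def residualBound (I p : Ideal R) : ℕ∞ :=
  if I ≤ p then p.height else p.height + 1

lemma residualBound_of_le (h : I ≤ p) : residualBound I p = p.height := if_pos h

lemma residualBound_of_not_le (h : ¬ I ≤ p) : residualBound I p = p.height + 1 := if_neg h

lemma residualBound_le (I p : Ideal R) : residualBound I p ≤ p.height + 1 := by
  rw [residualBound]
  split_ifs
  exacts [le_self_add, le_rfl]

lemma residualBound_add_one_le [q.IsPrime] [p.IsPrime] (hqp : q < p) (h : I ≤ q ↔ I ≤ p) :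
    residualBound I q + 1 ≤ residualBound I p := by
  have height_lt := Ideal.height_add_one_le_of_lt_of_isPrime hqp
  by_cases hI : I ≤ p
  · rwa [residualBound_of_le hI, residualBound_of_le (h.2 hI)]
  · rw [residualBound_of_not_le hI, residualBound_of_not_le (mt h.1 hI)]
    gcongr

/-- An `i`-generated ideal `N ⊆ A` in general position: at the primes `p` of height less than `s`,
the number of generators of `A` modulo `N` is at most `residualBound I p - i`. -/
def InGeneralPosition (I A N : Ideal R) (s i : ℕ) : Prop :=
  ∀ p : Ideal R, p.IsPrime → p.height < s → ∀ k : ℕ, residualBound I p ≤ ((k + i : ℕ) : ℕ∞) →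
    ¬ generationIdeal A N k ≤ p

namespace InGeneralPosition

lemma mem_minimalPrimes (h : InGeneralPosition I A N s i) [p.IsPrime] (hps : p.height < s)
    (hk : residualBound I p ≤ ((k + 1 + i : ℕ) : ℕ∞)) (hbad : generationIdeal A N k ≤ p) :
    p ∈ (generationIdeal A N k).minimalPrimes ∪ (I ⊔ generationIdeal A N k).minimalPrimes := by
  have le_of_iff : ∀ q : Ideal R, q.IsPrime → generationIdeal A N k ≤ q → q ≤ p →
      (I ≤ q ↔ I ≤ p) → p ≤ q := by
    intro q hq hbadq hqp hI
    by_contra hpq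
    refine h q hq ((Ideal.height_mono hqp).trans_lt hps) k ?_ hbadq
    have := (residualBound_add_one_le (lt_of_le_not_ge hqp hpq) hI).trans hk
    rw [add_right_comm k, Nat.cast_add_one] at this
    exact (ENat.add_le_add_iff_right ENat.one_ne_top).1 this
  by_cases hI : I ≤ p
  · refine Or.inr ⟨⟨‹_›, sup_le hI hbad⟩, fun q hq hqp => ?_⟩
    exact le_of_iff q hq.1 (le_sup_right.trans hq.2) hqp
      (iff_of_true (le_sup_left.trans hq.2) hI)
  · refine Or.inl ⟨⟨‹_›, hbad⟩, fun q hq hqp => ?_⟩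
    exact le_of_iff q hq.1 hq.2 hqp (iff_of_false (fun hIq => hI (hIq.trans hqp)) hI)

variable [IsNoetherianRing R]

lemma finite_setOf_generationIdeal_le (h : InGeneralPosition I A N s i) :
    {p : Ideal R | p.IsPrime ∧ p.height < s ∧ ∃ k : ℕ,
      residualBound I p ≤ ((k + 1 + i : ℕ) : ℕ∞) ∧ generationIdeal A N k ≤ p}.Finite := by
  refine ((Set.finite_Iio s).biUnion fun k _ =>
    ((generationIdeal A N k).finite_minimalPrimes_of_isNoetherianRing R).union
      ((I ⊔ generationIdeal A N k).finite_minimalPrimes_of_isNoetherianRing R)).subset ?_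
  rintro p ⟨hp, hps, k, hk, hbad⟩
  have hks : ((k + i : ℕ) : ℕ∞) < s := by
    refine (lt_of_not_ge fun hle => h p hp hps k hle hbad).trans_le ?_
    exact (residualBound_le I p).trans (Order.add_one_le_of_lt hps)
  rw [Nat.cast_lt] at hks
  exact Set.mem_biUnion (Set.mem_Iio.2 (by omega)) (h.mem_minimalPrimes hps hk hbad)

lemma exists_sup_span_singleton (h : InGeneralPosition I A N s i) {m : Ideal R}
    (hm : ∀ p : Ideal R, p.IsPrime → p.height < s → ¬ m ≤ p) {a₀ : R} (ha₀ : a₀ ∈ A) :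
    ∃ z ∈ A, z - a₀ ∈ m • A ∧ InGeneralPosition I A (N ⊔ Ideal.span {z}) s (i + 1) := by
  have hfin := h.finite_setOf_generationIdeal_le
  obtain ⟨z, hzA, hza, hz⟩ := exists_isBasicAt_sub_mem_smul (N := N) (m := m) hfin.toFinset
    (fun p hp => by
      obtain ⟨hp, hps, k, -, hbad⟩ := hfin.mem_toFinset.1 hp
      refine ⟨hp, hm p hp hps, exists_isBasicAt (IsNoetherian.noetherian A) ?_⟩
      rw [← generationIdeal_zero]
      exact (generationIdeal_mono le_rfl k.zero_le).trans hbad) ha₀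
  refine ⟨z, hzA, hza, fun p hp hps k hk => ?_⟩
  rw [add_comm i, ← add_assoc] at hk
  by_cases hbad : generationIdeal A N k ≤ p
  · have hbasic := hz p (hfin.mem_toFinset.2 ⟨hp, hps, k, hk, hbad⟩)
    exact hbasic.not_generationIdeal_sup_span_singleton_le hzA (h p hp hps (k + 1) hk)
  · exact fun hle => hbad ((generationIdeal_mono le_sup_left le_rfl).trans hle)

end InGeneralPosition

lemma exists_finset_of_muE_le {M : Type v} [AddCommGroup M] [Module R M] {N : Submodule R M}
    (h : muE N ≤ k) : ∃ S : Finset M, S.card ≤ k ∧ Submodule.span R (S : Set M) = N := by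
  rw [muE, ← ENat.lt_add_one_iff (ENat.natCast_ne_top k), sInf_lt_iff] at h
  obtain ⟨_, ⟨S, rfl, hS⟩, hlt⟩ := h
  exact ⟨S, by exact_mod_cast (ENat.lt_add_one_iff (ENat.natCast_ne_top k)).1 hlt, hS⟩

lemma map_algebraMap_eq_of_not_colon_le [p.IsPrime] (hAI : A ≤ I)
    (h : ¬ A.colon (I : Set R) ≤ p) :
    A.map (algebraMap R (Localization.AtPrime p)) =
      I.map (algebraMap R (Localization.AtPrime p)) := by
  refine (Ideal.map_mono hAI).antisymm (Ideal.map_le_iff_le_comap.2 fun u hu => ?_)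
  obtain ⟨t, ht, htp⟩ := SetLike.not_le_iff_exists.1 h
  exact (IsLocalization.algebraMap_mem_map_algebraMap_iff p.primeCompl _ A u).2
    ⟨t, htp, Submodule.mem_colon.1 ht u hu⟩

lemma not_generationIdeal_bot_le_of_muE_map_le [p.IsPrime] (hA : A.FG)
    (h : muE (A.map (algebraMap R (Localization.AtPrime p))) ≤ k) :
    ¬ generationIdeal A ⊥ k ≤ p := by
  classical
  obtain ⟨S, hSk, hS⟩ := exists_finset_of_muE_le h
  have exists_lift : ∀ x ∈ S, ∃ c ∈ A, ∃ w : p.primeCompl,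
      x * algebraMap R (Localization.AtPrime p) w = algebraMap R _ c := by
    intro x hx
    have hxA : x ∈ A.map (algebraMap R (Localization.AtPrime p)) := hS ▸ Submodule.subset_span hx
    obtain ⟨⟨c, w⟩, h⟩ := (IsLocalization.mem_map_algebraMap_iff p.primeCompl _).1 hxA
    exact ⟨c, c.2, w, h⟩
  choose! c hcA w hcw using exists_lift
  refine not_generationIdeal_le_iff.2 ⟨S.image c, ?_, Finset.card_image_le.trans hSk, fun hle => ?_⟩
  · rw [Finset.coe_image]
    exact Set.image_subset_iff.2 hcA
  obtain ⟨u, hu, hup⟩ := exists_colon_singleton_le_of_colon_le hA hle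
  have hspan : A.map (algebraMap R (Localization.AtPrime p)) ≤
      (⊥ ⊔ Ideal.span (S.image c : Set R)).map (algebraMap R (Localization.AtPrime p)) := by
    rw [← hS]
    refine Submodule.span_le.2 fun x hx => ?_
    have := IsLocalization.map_units (Localization.AtPrime p) (w x)
    refine (Ideal.mul_unit_mem_iff_mem _ this).1 (hcw x hx ▸ Ideal.mem_map_of_mem _ ?_)
    exact Ideal.mem_sup_right (Ideal.subset_span (Finset.mem_image_of_mem c hx))
  obtain ⟨t, ht, htu⟩ := (IsLocalization.algebraMap_mem_map_algebraMap_iff p.primeCompl _ _ u).1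
    (hspan (Ideal.mem_map_of_mem _ hu))
  exact ht (hup (Submodule.mem_colon_singleton.2 htu))

lemma InGeneralPosition.not_colon_le (h : InGeneralPosition I A N s i)
    (hs : ∀ p : Ideal R, p.IsPrime → p.height < s → ¬ A.colon (I : Set R) ≤ p) [hp : p.IsPrime]
    (hps : p.height < s) (hi : residualBound I p ≤ i) : ¬ N.colon (I : Set R) ≤ p := by
  have hA := h p hp hps 0 (by rwa [zero_add])
  rw [generationIdeal_zero] at hA
  intro hle
  refine (hp.mul_le.1 ((Ideal.mul_le.2 fun t ht u hu => ?_).trans hle)).elim hA (hs p hp hps)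
  refine Submodule.mem_colon.2 fun y hy => ?_
  rw [mul_smul]
  exact Submodule.mem_colon.1 ht _ (Submodule.mem_colon.1 hu y hy)

variable [IsNoetherianRing R]

lemma inGeneralPosition_bot (hAI : A ≤ I) (hG : Gcond I s)
    (hs : ∀ p : Ideal R, p.IsPrime → p.height < s → ¬ A.colon (I : Set R) ≤ p) :
    InGeneralPosition I A ⊥ s 0 := by
  intro p hp hps k hk
  rw [add_zero] at hk
  by_cases hIp : I ≤ p
  · refine not_generationIdeal_bot_le_of_muE_map_le (IsNoetherian.noetherian A) ?_
    rw [map_algebraMap_eq_of_not_colon_le hAI (hs p hp hps)]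
    rw [residualBound_of_le hIp] at hk
    have hmu := hG ⟨p, hp⟩ hIp (by rw [rDim_localization_atPrime]; exact_mod_cast hps)
    rw [rDim_localization_atPrime] at hmu
    exact (WithBot.coe_le_coe.1 hmu).trans hk
  · rw [residualBound_of_not_le hIp] at hk
    obtain ⟨x, hx, hxp⟩ := SetLike.not_le_iff_exists.1 hIp
    obtain ⟨t, ht, htp⟩ := SetLike.not_le_iff_exists.1 (hs p hp hps)
    have htx : t * x ∈ A := Submodule.mem_colon.1 ht x hx
    refine not_generationIdeal_le_iff.2 ⟨{t * x}, by simpa using htx, ?_, fun hle => ?_⟩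
    · exact_mod_cast (self_le_add_left 1 p.height).trans hk
    · refine (hp.mem_or_mem (hle (Submodule.mem_colon.2 fun y _ => ?_))).elim htp hxp
      exact Ideal.mul_mem_right _ _ (Ideal.mem_sup_right (Ideal.subset_span (by simp)))

end GeneralPosition

section SerreConditionTwo

variable {R : Type u} [CommRing R] {L p q q' : Ideal R} [p.IsPrime] {b : R}

lemma isSMulRegular_quotient_map_atPrime (h : IsSMulRegular (R ⧸ L) b) :
    IsSMulRegular (Localization.AtPrime p ⧸ L.map (algebraMap R (Localization.AtPrime p)))
      (algebraMap R (Localization.AtPrime p) b) := by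
  rw [← Ideal.localized'_eq_map (Localization.AtPrime p) p.primeCompl]
  exact h.of_isLocalizedModule _ p.primeCompl
    (Submodule.toLocalizedQuotient' _ _ (Algebra.linearMap R (Localization.AtPrime p)) L)

lemma maximalIdeal_mem_associatedPrimes_quotient_map (h : p ∈ associatedPrimes R (R ⧸ L)) :
    maximalIdeal (Localization.AtPrime p) ∈ associatedPrimes (Localization.AtPrime p)
      (Localization.AtPrime p ⧸ L.map (algebraMap R (Localization.AtPrime p))) := by
  rw [← Ideal.localized'_eq_map (Localization.AtPrime p) p.primeCompl]
  refine
    Module.associatedPrimes.mem_associatedPrimes_of_comap_mem_associatedPrimes_of_isLocalizedModule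
      p.primeCompl
      (Submodule.toLocalizedQuotient' _ _ (Algebra.linearMap R (Localization.AtPrime p)) L) _ ?_
  rwa [← Ideal.under_def, Localization.AtPrime.under_maximalIdeal]

lemma two_le_rDim_quotient_map_atPrime [hq : q.IsPrime] [hq' : q'.IsPrime] (hLq : L ≤ q)
    (hqq' : q < q') (hq'p : q' < p) :
    2 ≤ rDim (Localization.AtPrime p ⧸ L.map (algebraMap R (Localization.AtPrime p))) := by
  let e := (IsLocalization.AtPrime.primeSpectrumOrderIso (Localization.AtPrime p) p).symm
  have le_e : ∀ r : Set.Iic (⟨p, ‹_›⟩ : PrimeSpectrum R), L ≤ r.1.asIdeal →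
      L.map (algebraMap R (Localization.AtPrime p)) ≤ (e r).asIdeal := by
    intro r hr
    rw [Ideal.map_le_iff_le_comap]
    exact hr.trans_eq (congrArg (fun r => r.1.asIdeal) (e.symm_apply_apply r)).symm
  rw [rDim, ringKrullDim_quotient]
  let Q : Fin 3 → Set.Iic (⟨p, ‹_›⟩ : PrimeSpectrum R) :=
    ![⟨⟨q, hq⟩, (hqq'.trans hq'p).le⟩, ⟨⟨q', hq'⟩, hq'p.le⟩, ⟨⟨p, ‹_›⟩, Set.self_mem_Iic⟩]
  have hQ : StrictMono Q := by
    refine Fin.strictMono_iff_lt_succ.2 fun i => ?_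
    fin_cases i
    exacts [hqq', hq'p]
  have hLQ : ∀ i, L ≤ (Q i).1.asIdeal := fun i => hLq.trans (hQ.monotone (Fin.zero_le i))
  exact Order.LTSeries.length_le_krullDim (α := PrimeSpectrum.zeroLocus _)
    { length := 2
      toFun := fun i => ⟨e (Q i), le_e _ (hLQ i)⟩
      step := fun i => e.strictMono (hQ i.castSucc_lt_succ) }

variable [IsNoetherianRing R]

lemma QuotS2.notMem_associatedPrimes_quotient_sup_span_singleton (hS2 : QuotS2 L) [q.IsPrime]
    [q'.IsPrime] (hLq : L ≤ q) (hqq' : q < q') (hq'p : q' < p)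
    (hb : IsSMulRegular (R ⧸ L) b) : p ∉ associatedPrimes R (R ⧸ L ⊔ Ideal.span {b}) := by
  intro hp
  set f := algebraMap R (Localization.AtPrime p)
  have hbp : b ∈ p := le_of_mem_associatedPrimes_quotient hp
    (Ideal.mem_sup_right (Ideal.mem_span_singleton_self b))
  have hfb : f b ∈ maximalIdeal (Localization.AtPrime p) :=
    (IsLocalization.AtPrime.to_map_mem_maximal_iff _ p b).2 hbp
  have hLp : L ≤ p := hLq.trans (hqq'.trans hq'p).le
  have : Nontrivial (Localization.AtPrime p ⧸ L.map f) :=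
    Ideal.Quotient.nontrivial_iff.2 (ne_top_of_le_ne_top (maximalIdeal.isMaximal _).ne_top
      ((Ideal.map_mono hLp).trans_eq Localization.AtPrime.map_eq_maximalIdeal))
  have two_le_depth := hS2 p ‹_› hLp
  rw [min_eq_left (two_le_rDim_quotient_map_atPrime hLq hqq' hq'p)] at two_le_depth
  have depth_drop := mDepth_le_mDepth_quotSMulTop_add_one
    (isSMulRegular_quotient_map_atPrime (p := p) hb) hfb
  rw [mDepth_congr (quotSMulTopQuotientEquiv (L.map f) (f b))] at depth_drop
  have depth_ne_zero : mDepth (Localization.AtPrime p)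
      (Localization.AtPrime p ⧸ L.map f ⊔ Ideal.span {f b}) ≠ 0 := by
    intro h
    rw [h, zero_add] at depth_drop
    exact absurd ((WithBot.coe_le_coe.1 two_le_depth).trans depth_drop) (by decide)
  obtain ⟨x, hxm, hx⟩ := exists_isSMulRegular_of_mDepth_ne_zero depth_ne_zero
  have hmax := maximalIdeal_mem_associatedPrimes_quotient_map hp
  rw [Ideal.map_sup, Ideal.map_span, Set.image_singleton] at hmax
  exact notMem_of_mem_associatedPrimes hmax hx hxm

end SerreConditionTwo

section AssociatedPrimes

variable {R : Type u} [CommRing R] {I N p : Ideal R} {b y z : R} {i : ℕ}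

lemma colon_mul_le (N I : Ideal R) : N.colon (I : Set R) * I ≤ N :=
  Ideal.mul_le.2 fun _ hr x hx => Submodule.mem_colon.1 hr x hx

lemma colon_le_of_mem_associatedPrimes_map_mkQ
    (hp : p ∈ associatedPrimes R (Submodule.map N.mkQ I)) : N.colon (I : Set R) ≤ p := by
  rw [← Submodule.annihilator_map_mkQ_eq_colon]
  simpa only [Submodule.annihilator_top] using IsAssociatedPrime.annihilator_le hp

variable [IsNoetherianRing R]

lemma mem_associatedPrimes_quotient_iff : p ∈ associatedPrimes R (R ⧸ N) ↔
    p.IsPrime ∧ ∃ y, p = N.colon {y} := by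
  have colon_eq : ∀ y : R, Submodule.colon ⊥ {Submodule.Quotient.mk (p := N) y} = N.colon {y} := by
    refine fun y => Ideal.ext fun r => ?_
    rw [Submodule.mem_colon_singleton, Submodule.mem_colon_singleton, Submodule.mem_bot,
      ← Submodule.Quotient.mk_smul, Submodule.Quotient.mk_eq_zero]
  rw [AssociatedPrimes.mem_iff, isAssociatedPrime_iff,
    (Submodule.Quotient.mk_surjective N).exists]
  simp only [colon_eq]

lemma mem_associatedPrimes_map_mkQ_iff : p ∈ associatedPrimes R (Submodule.map N.mkQ I) ↔
    p.IsPrime ∧ ∃ y ∈ I, p = N.colon {y} := by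
  have colon_eq : ∀ y (hy : y ∈ I), Submodule.colon (⊥ : Submodule R (Submodule.map N.mkQ I))
      {⟨N.mkQ y, Submodule.mem_map_of_mem hy⟩} = N.colon {y} := fun y hy => by
    ext r
    rw [Submodule.mem_colon_singleton, Submodule.mem_colon_singleton, Submodule.mem_bot,
      SetLike.mk_smul_mk, Submodule.mk_eq_zero, ← map_smul, Submodule.mkQ_apply,
      Submodule.Quotient.mk_eq_zero]
  rw [AssociatedPrimes.mem_iff, isAssociatedPrime_iff]
  refine and_congr_right fun _ => ⟨?_, fun ⟨y, hy, hp⟩ => ⟨_, hp.trans (colon_eq y hy).symm⟩⟩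
  rintro ⟨⟨_, y, hy, rfl⟩, hp⟩
  exact ⟨y, hy, hp.trans (colon_eq y hy)⟩

lemma exists_mem_associatedPrimes_map_mkQ (hzI : z ∈ I) (hzN : z ∉ N) :
    ∃ p ∈ associatedPrimes R (Submodule.map N.mkQ I), N.colon {z} ≤ p := by
  obtain ⟨p, hp, hle⟩ := exists_le_isAssociatedPrime_of_isNoetherianRing R
    (⟨N.mkQ z, Submodule.mem_map_of_mem hzI⟩ : Submodule.map N.mkQ I)
    (fun h => hzN ((Submodule.Quotient.mk_eq_zero N).1 (congrArg Subtype.val h)))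
  refine ⟨p, hp, fun r hr => hle (Submodule.mem_colon_singleton.2 (Subtype.ext ?_))⟩
  exact (Submodule.Quotient.mk_eq_zero N).2 (Submodule.mem_colon_singleton.1 hr)

lemma mem_associatedPrimes_map_mkQ_of_mem_minimalPrimes
    (hp : p ∈ (N.colon (I : Set R)).minimalPrimes) :
    p ∈ associatedPrimes R (Submodule.map N.mkQ I) := by
  rw [← Submodule.annihilator_map_mkQ_eq_colon] at hp
  exact Module.associatedPrimes.minimalPrimes_annihilator_subset_associatedPrimes R _ hp

/-- The associated primes of the module `(I + N) / N` have height at most `i`: an inductively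
provable form of the unmixedness of `(I + N) / N`. -/
def AssociatedPrimesHeightLE (I N : Ideal R) (i : ℕ) : Prop :=
  ∀ p ∈ associatedPrimes R (Submodule.map N.mkQ I), p.height ≤ i

namespace AssociatedPrimesHeightLE

lemma inf_colon_le (h : AssociatedPrimesHeightLE I N i)
    (hht : ((i + 1 : ℕ) : ℕ∞) ≤ (I ⊔ N.colon (I : Set R)).height) :
    I ⊓ N.colon (I : Set R) ≤ N := by
  rintro z ⟨hzI, hz⟩
  by_contra hzN
  obtain ⟨p, hp, hle⟩ := exists_mem_associatedPrimes_map_mkQ hzI hzN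
  have hIp : I ≤ p := fun x hx => hle (Submodule.mem_colon_singleton.2 (by
    rw [smul_eq_mul, mul_comm]
    exact Submodule.mem_colon.1 hz x hx))
  have := hht.trans ((Ideal.height_mono (sup_le hIp
    (colon_le_of_mem_associatedPrimes_map_mkQ hp))).trans (h p hp))
  exact absurd (Nat.cast_le.1 this) (by omega)

lemma mem_colon_of_mul_mem (h : AssociatedPrimesHeightLE I N i)
    (hht : ((i + 1 : ℕ) : ℕ∞) ≤ (I ⊔ N.colon (I : Set R)).height)
    (hht' : ((i + 1 : ℕ) : ℕ∞) ≤ ((N ⊔ Ideal.span {b}).colon (I : Set R)).height)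
    (hy : y * b ∈ N) : y ∈ N.colon (I : Set R) := by
  refine Submodule.mem_colon.2 fun x hx => ?_
  by_contra hyx
  obtain ⟨p, hp, hle⟩ := exists_mem_associatedPrimes_map_mkQ (I.mul_mem_left y hx) hyx
  have hNp : N ⊔ Ideal.span {b} ≤ p := by
    refine le_trans (sup_le (fun r hr => ?_) ((Ideal.span_singleton_le_iff_mem _).2 ?_)) hle
    · exact Submodule.mem_colon_singleton.2 (N.mul_mem_right _ hr)
    · rw [Submodule.mem_colon_singleton, smul_eq_mul, ← mul_assoc, mul_comm b]
      exact N.mul_mem_right x hy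
  have hlt : ((i + 1 : ℕ) : ℕ∞) ≤ p.height := by
    rcases hp.isPrime.mul_le.1 ((colon_mul_le _ I).trans hNp) with hle | hIp
    · exact hht'.trans (Ideal.height_mono hle)
    · exact hht.trans (Ideal.height_mono
        (sup_le hIp (colon_le_of_mem_associatedPrimes_map_mkQ hp)))
  exact absurd (Nat.cast_le.1 (hlt.trans (h p hp))) (by omega)

lemma isSMulRegular_quotient_colon (h : AssociatedPrimesHeightLE I N i) (hb : b ∈ I)
    (hht : ((i + 1 : ℕ) : ℕ∞) ≤ (I ⊔ N.colon (I : Set R)).height)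
    (hht' : ((i + 1 : ℕ) : ℕ∞) ≤ ((N ⊔ Ideal.span {b}).colon (I : Set R)).height) :
    IsSMulRegular (R ⧸ N.colon (I : Set R)) b := by
  refine (isSMulRegular_quotient_iff_mem_of_smul_mem _ b).2 fun x hx => ?_
  refine h.mem_colon_of_mul_mem hht hht' (mul_comm b x ▸ h.inf_colon_le hht ⟨?_, hx⟩)
  exact I.mul_mem_right x hb

lemma colon_sup_span_singleton (h : AssociatedPrimesHeightLE I N i) (hb : b ∈ I)
    (hht : ((i + 1 : ℕ) : ℕ∞) ≤ (I ⊔ N.colon (I : Set R)).height) (hy : y ∈ I) :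
    (N.colon (I : Set R) ⊔ Ideal.span {b}).colon {y} = (N ⊔ Ideal.span {b}).colon {y} := by
  refine le_antisymm (fun r hr => ?_) (Submodule.colon_mono ?_ le_rfl)
  · rw [Submodule.mem_colon_singleton] at hr ⊢
    have hmem : r • y ∈ (Ideal.span {b} ⊔ N.colon (I : Set R)) ⊓ I :=
      ⟨sup_comm (N.colon (I : Set R)) _ ▸ hr, I.mul_mem_left r hy⟩
    rw [sup_inf_assoc_of_le _ ((Ideal.span_singleton_le_iff_mem I).2 hb), inf_comm] at hmem
    exact sup_comm N _ ▸ (sup_le_sup_left (h.inf_colon_le hht) _ hmem)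
  · exact sup_le_sup_right Ideal.le_colon _

/- If `(I + N + (b)) / (N + (b))` had an associated prime `p` of height greater than `i + 1`, then
`p` would be associated to `R / (L + (b))` for `L = N : I`. As `b` is regular on `R / L` and
`p` has height at least two modulo `L`, this contradicts `S₂`. -/
lemma sup_span_singleton [IsLocalRing R] (hCM : IsCMLocalRing R)
    (h : AssociatedPrimesHeightLE I N i) (hb : b ∈ I)
    (hht : ((i + 1 : ℕ) : ℕ∞) ≤ (I ⊔ N.colon (I : Set R)).height)
    (hht' : ((i + 1 : ℕ) : ℕ∞) ≤ ((N ⊔ Ideal.span {b}).colon (I : Set R)).height)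
    (hS2 : QuotS2 (N.colon (I : Set R))) :
    AssociatedPrimesHeightLE I (N ⊔ Ideal.span {b}) (i + 1) := by
  intro p hp
  by_contra! hheight
  have colon_le : N.colon (I : Set R) ≤ p :=
    (Submodule.colon_mono le_sup_left le_rfl).trans (colon_le_of_mem_associatedPrimes_map_mkQ hp)
  obtain ⟨hp, y, hy, hpy⟩ := mem_associatedPrimes_map_mkQ_iff.1 hp
  obtain ⟨q, hq, hqp⟩ := Ideal.exists_minimalPrimes_le colon_le
  have := hq.1.1
  have hqi : q.height ≤ i := h q (mem_associatedPrimes_map_mkQ_of_mem_minimalPrimes hq)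
  have hqp' : q.height + 1 < p.height := by
    refine lt_of_le_of_lt ?_ hheight
    push_cast
    gcongr
  have hne : q ≠ p := by
    rintro rfl
    exact hqp'.not_ge le_self_add
  obtain ⟨q', hq', hqq', hq'p⟩ := hCM.exists_isPrime_between (lt_of_le_of_ne hqp hne) hqp'
  refine hS2.notMem_associatedPrimes_quotient_sup_span_singleton hq.1.2 hqq' hq'p
    (h.isSMulRegular_quotient_colon hb hht hht') (mem_associatedPrimes_quotient_iff.2 ⟨hp, y, ?_⟩)
  rw [hpy, h.colon_sup_span_singleton hb hht hy]

end AssociatedPrimesHeightLE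

end AssociatedPrimes

section ResidualSequence

variable {R : Type u} [CommRing R] {I A N : Ideal R} {b : ℕ → R} {s i j : ℕ}

/-- The ideal generated by the first `i` terms of the sequence `b`. -/
def initialSpan (b : ℕ → R) (i : ℕ) : Ideal R := Ideal.span (b '' Set.Iio i)

lemma initialSpan_zero (b : ℕ → R) : initialSpan b 0 = ⊥ := by
  rw [initialSpan, ← Nat.bot_eq_zero, Set.Iio_bot, Set.image_empty, Ideal.span_empty]

lemma initialSpan_succ (b : ℕ → R) (i : ℕ) :
    initialSpan b (i + 1) = initialSpan b i ⊔ Ideal.span {b i} := by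
  rw [initialSpan, initialSpan, ← Ideal.span_union, Set.Iio_add_one_eq_Iic,
    ← Set.Iio_insert, Set.image_insert_eq, Set.insert_eq, Set.union_comm]

lemma initialSpan_mono (b : ℕ → R) (hij : i ≤ j) : initialSpan b i ≤ initialSpan b j :=
  Ideal.span_mono (Set.image_mono (Set.Iio_subset_Iio hij))

lemma mem_initialSpan (b : ℕ → R) (hij : i < j) : b i ∈ initialSpan b j :=
  Ideal.subset_span ⟨i, hij, rfl⟩

lemma initialSpan_le (hb : ∀ i, b i ∈ A) (i : ℕ) : initialSpan b i ≤ A :=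
  Ideal.span_le.2 (Set.image_subset_iff.2 fun j _ => hb j)

/-- A sequence of elements of `I` whose initial segments `b 0, …, b (i - 1)` cut out geometric
`i`-residual intersections of `I` for `i < s` and an `s`-residual intersection for `i = s`, except
that these may be the unit ideal and `i` may be less than the height of `I`. -/
structure IsResidualSequence (I : Ideal R) (s : ℕ) (b : ℕ → R) : Prop where
  mem : ∀ i, b i ∈ I
  le_height_colon : ∀ i ≤ s, (i : ℕ∞) ≤ ((initialSpan b i).colon (I : Set R)).height
  lt_height_sup_colon : ∀ i < s,
    ((i + 1 : ℕ) : ℕ∞) ≤ (I ⊔ (initialSpan b i).colon (I : Set R)).height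

lemma IsResidualSequence.isGeometricRI (h : IsResidualSequence I s b)
    (hne : (initialSpan b s).colon (I : Set R) ≠ ⊤) (his : i < s) (hI : I.height ≤ i) :
    IsGeometricRI I ((initialSpan b i).colon (I : Set R)) i := by
  classical
  refine ⟨⟨?_, ?_, ?_, initialSpan b i, initialSpan_le h.mem i, ?_, rfl⟩, ?_⟩
  · exact ne_top_of_le_ne_top hne (Submodule.colon_mono (initialSpan_mono b his.le) le_rfl)
  · rw [ht_eq_height]
    exact_mod_cast hI
  · rw [ht_eq_height]
    exact_mod_cast h.le_height_colon i his.le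
  · refine ⟨(Finset.range i).image b, Finset.card_image_le.trans (Finset.card_range i).le, ?_⟩
    rw [Finset.coe_image, Finset.coe_range, initialSpan]
  · rw [ht_eq_height]
    exact_mod_cast h.lt_height_sup_colon i his

lemma InGeneralPosition.le_height_colon (h : InGeneralPosition I A N s i)
    (hs : ∀ p : Ideal R, p.IsPrime → p.height < s → ¬ A.colon (I : Set R) ≤ p) (hi : i ≤ s) :
    (i : ℕ∞) ≤ (N.colon (I : Set R)).height := by
  refine le_height_iff.2 fun p _ hle => le_of_not_gt fun hlt => ?_
  refine h.not_colon_le hs (hlt.trans_le (Nat.cast_le.2 hi)) ?_ hle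
  exact (residualBound_le I p).trans (Order.add_one_le_of_lt hlt)

lemma InGeneralPosition.lt_height_sup_colon (h : InGeneralPosition I A N s i)
    (hs : ∀ p : Ideal R, p.IsPrime → p.height < s → ¬ A.colon (I : Set R) ≤ p) (hi : i < s) :
    ((i + 1 : ℕ) : ℕ∞) ≤ (I ⊔ N.colon (I : Set R)).height := by
  refine le_height_iff.2 fun p _ hle => le_of_not_gt fun hlt => ?_
  refine h.not_colon_le hs (hlt.trans_le (Nat.cast_le.2 hi)) ?_ (le_sup_right.trans hle)
  rw [residualBound_of_le (le_sup_left.trans hle)]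
  exact ENat.lt_natCast_add_one_iff.1 hlt

variable [IsNoetherianRing R]

lemma exists_isResidualSequence (hAI : A ≤ I) (hG : Gcond I s)
    (hs : (s : ℕ∞) ≤ (A.colon (I : Set R)).height) {a : ℕ → R} (ha : ∀ i, a i ∈ A) :
    ∃ b : ℕ → R, (∀ i, b i ∈ A) ∧ (∀ i, b i - a i ∈ A.colon (I : Set R) • A) ∧
      IsResidualSequence I s b := by
  have not_le : ∀ p : Ideal R, p.IsPrime → p.height < s → ¬ A.colon (I : Set R) ≤ p :=
    fun p hp hps hle => (le_height_iff.1 hs p hp hle).not_gt hps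
  have step : ∀ i (N : {N : Ideal R // InGeneralPosition I A N s i}), ∃ z ∈ A,
      z - a i ∈ A.colon (I : Set R) • A ∧ InGeneralPosition I A (N.1 ⊔ Ideal.span {z}) s (i + 1) :=
    fun i N => N.2.exists_sup_span_singleton not_le (ha i)
  choose z hzA hza hz using step
  let N : ∀ i, {N : Ideal R // InGeneralPosition I A N s i} := fun i =>
    Nat.rec (motive := fun i => {N : Ideal R // InGeneralPosition I A N s i})
      ⟨⊥, inGeneralPosition_bot hAI hG not_le⟩ (fun i N => ⟨N.1 ⊔ Ideal.span {z i N}, hz i N⟩) i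
  have hN : ∀ i, initialSpan (fun i => z i (N i)) i = N i := by
    intro i
    induction i with
    | zero => exact initialSpan_zero _
    | succ i ih => rw [initialSpan_succ, ih]
  refine ⟨fun i => z i (N i), fun i => hzA _ _, fun i => hza _ _, fun i => hAI (hzA _ _), ?_, ?_⟩
  · exact fun i hi => hN i ▸ (N i).2.le_height_colon not_le hi
  · exact fun i hi => hN i ▸ (N i).2.lt_height_sup_colon not_le hi

variable [IsLocalRing R]

lemma IsCMOfCodim.associatedPrimesHeightLE (h : IsCMOfCodim N i) : AssociatedPrimesHeightLE I N i :=
  fun _ hp => (h.height_eq_of_mem_associatedPrimes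
    (associatedPrimes.subset_of_injective (Submodule.subtype_injective _) hp)).le

namespace IsResidualSequence

lemma isCMOfCodim_initialSpan (h : IsResidualSequence I s b) (hCM : IsCMLocalRing R)
    (hne : (initialSpan b s).colon (I : Set R) ≠ ⊤) (his : i ≤ s) (hiI : (i : ℕ∞) ≤ I.height) :
    IsCMOfCodim (initialSpan b i) i := by
  induction i with
  | zero => exact initialSpan_zero b ▸ hCM.isCMOfCodim_bot
  | succ i ih =>
    have hN := ih (by omega) ((Nat.cast_le.2 i.le_succ).trans hiI)
    have hbm : b i ∈ maximalIdeal R :=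
      le_maximalIdeal hne (Ideal.le_colon (mem_initialSpan b his))
    rw [initialSpan_succ]
    refine hN.sup_span_singleton
      (isSMulRegular_of_forall_notMem_associatedPrimes fun p hp hbp => ?_) hbm
    have hle : (initialSpan b (i + 1)).colon (I : Set R) * I ≤ p := by
      refine (colon_mul_le _ _).trans ?_
      rw [initialSpan_succ]
      exact sup_le (le_of_mem_associatedPrimes_quotient hp)
        ((Ideal.span_singleton_le_iff_mem p).2 hbp)
    have hheight : ((i + 1 : ℕ) : ℕ∞) ≤ p.height := (hp.isPrime.mul_le.1 hle).elim
      (fun hle => (h.le_height_colon _ his).trans (Ideal.height_mono hle))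
      (fun hle => hiI.trans (Ideal.height_mono hle))
    rw [hN.height_eq_of_mem_associatedPrimes hp, Nat.cast_le] at hheight
    omega

lemma associatedPrimesHeightLE (h : IsResidualSequence I s b) (hCM : IsCMLocalRing R)
    (hS2 : WeaklyResS2 I (s - 2)) (hne : (initialSpan b s).colon (I : Set R) ≠ ⊤) (his : i < s) :
    AssociatedPrimesHeightLE I (initialSpan b i) i := by
  induction i with
  | zero => exact (h.isCMOfCodim_initialSpan hCM hne his.le bot_le).associatedPrimesHeightLE
  | succ i ih =>
    by_cases hiI : ((i + 1 : ℕ) : ℕ∞) ≤ I.height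
    · exact (h.isCMOfCodim_initialSpan hCM hne his.le hiI).associatedPrimesHeightLE
    have hgeom := h.isGeometricRI hne (i.lt_succ_self.trans his)
      (ENat.lt_natCast_add_one_iff.1 (lt_of_not_ge hiI))
    rw [initialSpan_succ]
    refine (ih (by omega)).sup_span_singleton hCM (h.mem i) (h.lt_height_sup_colon i (by omega)) ?_
      (hS2 i (by omega) _ hgeom)
    exact initialSpan_succ b i ▸ h.le_height_colon (i + 1) his.le

lemma mem_colon_of_mul_mem (h : IsResidualSequence I s b) (hCM : IsCMLocalRing R)
    (hS2 : WeaklyResS2 I (s - 2)) (hne : (initialSpan b s).colon (I : Set R) ≠ ⊤) (his : i < s)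
    {y : R} (hy : y * b i ∈ initialSpan b i) : y ∈ (initialSpan b i).colon (I : Set R) :=
  (h.associatedPrimesHeightLE hCM hS2 hne his).mem_colon_of_mul_mem (h.lt_height_sup_colon i his)
    (initialSpan_succ b i ▸ h.le_height_colon (i + 1) his) hy

end IsResidualSequence

end ResidualSequence

section Relations

variable {R : Type u} [CommRing R] {M : Type*} [AddCommGroup M] [Module R M] {ι : Type*}
  {N : Submodule R M} {K : Ideal R}

lemma exists_span_range_eq_of_muE_le {s : ℕ} (h : muE N ≤ s) :
    ∃ a : Fin s → M, Submodule.span R (Set.range a) = N := by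
  obtain ⟨S, hS, hN⟩ := exists_finset_of_muE_le h
  have hrange : Set.range (fun l => (S.equivFin.symm l : M)) = S := by
    exact (S.equivFin.symm.surjective.range_comp Subtype.val).trans Subtype.range_coe
  refine ⟨Function.extend (Fin.castLE hS) (fun l => (S.equivFin.symm l : M)) 0, ?_⟩
  rw [Set.range_extend (Fin.castLE_injective hS), hrange, Submodule.span_union, hN]
  refine sup_of_le_left (Submodule.span_le.2 ?_)
  rintro _ ⟨_, -, rfl⟩
  exact N.zero_mem

lemma span_range_eq_of_sub_mem_smul [IsLocalRing R] (hN : N.FG) (hK : K ≠ ⊤) {a b : ι → M}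
    (ha : Submodule.span R (Set.range a) = N) (hb : ∀ i, b i ∈ N)
    (hba : ∀ i, b i - a i ∈ K • N) : Submodule.span R (Set.range b) = N := by
  refine le_antisymm (Submodule.span_le.2 (Set.range_subset_iff.2 hb)) ?_
  refine Submodule.le_of_le_smul_of_le_jacobson_bot hN
    ((le_maximalIdeal hK).trans (maximalIdeal_le_jacobson ⊥)) ?_
  conv_lhs => rw [← ha]
  refine Submodule.span_le.2 (Set.range_subset_iff.2 fun i => ?_)
  rw [← sub_sub_cancel (b i) (a i)]
  exact sub_mem (Submodule.mem_sup_left (Submodule.subset_span ⟨i, rfl⟩))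
    (Submodule.mem_sup_right (hba i))

variable [Fintype ι]

lemma mem_smul_span_range_iff_exists_fun {f : ι → M} {x : M} :
    x ∈ K • Submodule.span R (Set.range f) ↔ ∃ c : ι → R, (∀ i, c i ∈ K) ∧ ∑ i, c i • f i = x := by
  rw [Submodule.mem_ideal_smul_span_iff_exists_sum]
  constructor
  · rintro ⟨c, hc, rfl⟩
    exact ⟨c, hc, (Finsupp.sum_fintype c (fun i x => x • f i) fun i => zero_smul R (f i)).symm⟩
  · rintro ⟨c, hc, rfl⟩
    exact ⟨Finsupp.equivFunOnFinite.symm c, hc,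
      Finsupp.sum_fintype _ _ fun i => zero_smul R (f i)⟩

lemma coeff_mem_of_sub_mem_smul_span {a b : ι → M} {i : ι}
    (hba : ∀ j, b j - a j ∈ K • Submodule.span R (Set.range b))
    (hb : ∀ r : ι → R, ∑ j, r j • b j = 0 → r i ∈ K)
    {r : ι → R} (hr : ∑ j, r j • a j = 0) : r i ∈ K := by
  choose c hcK hc using fun j => mem_smul_span_range_iff_exists_fun.1 (hba j)
  have hrel : ∑ l, (r l - ∑ j, r j * c j l) • b l = 0 := by
    simp only [sub_smul, Finset.sum_smul, mul_smul, Finset.sum_sub_distrib]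
    rw [Finset.sum_comm]
    simp only [← Finset.smul_sum, hc, smul_sub, Finset.sum_sub_distrib, sub_sub_cancel, hr]
  rw [← sub_add_cancel (r i) (∑ j, r j * c j i)]
  exact K.add_mem (hb _ hrel) (K.sum_mem fun j _ => K.mul_mem_left _ (hcK j i))

lemma nonempty_quotient_smul_top_equiv {f : ι → M} (hf : Submodule.span R (Set.range f) = ⊤)
    (hrel : ∀ r : ι → R, ∑ i, r i • f i = 0 → ∀ i, r i ∈ K) :
    Nonempty ((M ⧸ K • (⊤ : Submodule R M)) ≃ₗ[R] (ι → R ⧸ K)) := by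
  classical
  let φ := (K • (⊤ : Submodule R M)).mkQ ∘ₗ Fintype.linearCombination R f
  have surjective : Function.Surjective φ := (Submodule.mkQ_surjective _).comp
    (LinearMap.range_eq_top.1 ((Fintype.range_linearCombination R f).trans hf))
  have ker_eq : LinearMap.ker φ = Submodule.pi Set.univ fun _ => K := by
    ext r
    rw [LinearMap.ker_comp, Submodule.ker_mkQ, Submodule.mem_comap, ← hf,
      mem_smul_span_range_iff_exists_fun, Fintype.linearCombination_apply, Submodule.mem_pi]
    refine ⟨fun ⟨c, hcK, hc⟩ i _ => ?_, fun hr => ⟨r, fun i => hr i trivial, rfl⟩⟩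
    have hrc := hrel (r - c) (by
      simp only [Pi.sub_apply, sub_smul, Finset.sum_sub_distrib, hc, sub_self]) i
    exact (K.sub_mem_iff_left (hcK i)).1 hrc
  exact ⟨(φ.quotKerEquivOfSurjective surjective).symm ≪≫ₗ Submodule.quotEquivOfEq _ _ ker_eq ≪≫ₗ
    Submodule.quotientPi fun _ => K⟩

end Relations

section ResidualIntersection

variable {R : Type u} [CommRing R] [IsNoetherianRing R] [IsLocalRing R] {I A : Ideal R} {s : ℕ}

lemma IsResidualSequence.coeff_last_mem {b : ℕ → R} (h : IsResidualSequence I (s + 1) b)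
    (hCM : IsCMLocalRing R) (hS2 : WeaklyResS2 I (s + 1 - 2))
    (hne : (initialSpan b (s + 1)).colon (I : Set R) ≠ ⊤) {r : Fin (s + 1) → R}
    (hr : ∑ j, r j • b j = 0) :
    r (Fin.last s) ∈ (initialSpan b (s + 1)).colon (I : Set R) := by
  refine Submodule.colon_mono (initialSpan_mono b s.le_succ) le_rfl
    (h.mem_colon_of_mul_mem hCM hS2 hne s.lt_succ_self ?_)
  rw [Fin.sum_univ_castSucc, add_comm, add_eq_zero_iff_eq_neg] at hr
  change r (Fin.last s) • b (Fin.last s) ∈ initialSpan b s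
  rw [hr]
  exact neg_mem (sum_mem fun j _ => Ideal.mul_mem_left _ _ (mem_initialSpan b j.2))

lemma coeff_last_mem_colon (hCM : IsCMLocalRing R) (hAI : A ≤ I) (hG : Gcond I (s + 1))
    (hS2 : WeaklyResS2 I (s + 1 - 2)) (hne : A.colon (I : Set R) ≠ ⊤)
    (hs : ((s + 1 : ℕ) : ℕ∞) ≤ (A.colon (I : Set R)).height) {a r : Fin (s + 1) → R}
    (ha : Ideal.span (Set.range a) = A) (hr : ∑ j, r j • a j = 0) :
    r (Fin.last s) ∈ A.colon (I : Set R) := by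
  obtain ⟨b, hbA, hba, hb⟩ := exists_isResidualSequence (a := fun i => a (Fin.ofNat (s + 1) i))
    hAI hG hs fun i => ha ▸ Ideal.subset_span ⟨_, rfl⟩
  have hba' : ∀ j : Fin (s + 1), b j - a j ∈ A.colon (I : Set R) • A := fun j => by
    simpa using hba j
  have hspan : Ideal.span (Set.range fun j : Fin (s + 1) => b j) = A :=
    span_range_eq_of_sub_mem_smul (IsNoetherian.noetherian A) hne ha (fun j => hbA j) hba'
  have hA : initialSpan b (s + 1) = A := by
    rw [initialSpan, ← Fin.range_val, ← Set.range_comp]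
    exact hspan
  rw [← hA] at hne
  refine coeff_mem_of_sub_mem_smul_span (b := fun j : Fin (s + 1) => b j)
    (fun j => ?_) (fun r hr => ?_) hr
  · exact hspan ▸ hba' j
  · exact hA ▸ hb.coeff_last_mem hCM hS2 hne hr

lemma coeff_mem_colon (hCM : IsCMLocalRing R) (hAI : A ≤ I) (hG : Gcond I s)
    (hS2 : WeaklyResS2 I (s - 2)) (hne : A.colon (I : Set R) ≠ ⊤)
    (hs : (s : ℕ∞) ≤ (A.colon (I : Set R)).height) {a r : Fin s → R}
    (ha : Ideal.span (Set.range a) = A) (hr : ∑ j, r j • a j = 0) (i : Fin s) :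
    r i ∈ A.colon (I : Set R) := by
  cases s with
  | zero => exact i.elim0
  | succ s =>
    let σ := Equiv.swap i (Fin.last s)
    have hlast := coeff_last_mem_colon hCM hAI hG hS2 hne hs (a := a ∘ σ) (r := r ∘ σ)
      (by rwa [EquivLike.range_comp]) ((Equiv.sum_comp σ fun j => r j • a j).trans hr)
    rwa [Function.comp_apply, Equiv.swap_apply_right] at hlast

end ResidualIntersection

/-- Lemma 2.5: if `I` satisfies `G_s` and is weakly `(s-2)`-residually `S₂`, and
`K = 𝔞 : I` is an `s`-residual intersection of `I` with `𝔞 ⊆ I`, `μ(𝔞) ≤ s`, then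
`𝔞 / K𝔞` is a free `R/K`-module of rank `s`. -/
theorem statement4 {R : Type u} [CommRing R] [IsNoetherianRing R] [IsLocalRing R]
    (hCM : IsCMLocalRing R)
    (I : Ideal R) (s : ℕ) (hG : Gcond I s) (hS2 : WeaklyResS2 I (s - 2))
    (a K : Ideal R) (ha : a ≤ I) (hmu : muE a ≤ (s : ℕ∞))
    (hK : K = Submodule.colon a I) (hRI : IsResidualIntersection I K s) :
    Nonempty ((↥a ⧸ (K • (⊤ : Submodule R ↥a))) ≃ₗ[R] (Fin s → R ⧸ K)) := by
  obtain ⟨hne, -, hheight, -⟩ := hRI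
  subst hK
  rw [ht_eq_height] at hheight
  obtain ⟨f, hf⟩ := exists_span_range_eq_of_muE_le hmu
  have hfa : ∀ i, f i ∈ a := fun i => hf ▸ Submodule.subset_span ⟨i, rfl⟩
  refine nonempty_quotient_smul_top_equiv (f := fun i => (⟨f i, hfa i⟩ : a)) ?_ fun r hr => ?_
  · exact (Submodule.span_range_subtype_eq_top_iff a hfa).2 hf
  · have hrel : ∑ i, r i • f i = 0 := by simpa using congrArg Subtype.val hr
    exact coeff_mem_colon hCM ha hG hS2 hne (by exact_mod_cast hheight) hf hrel

end CPU
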